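/- For every nonnegative integer n and complex number x such that 1+6x != 0: sum over k from 0 to n of ((3x)_k (-3x)_k (-n)_k)/(k! (1/2)_k (-1-3n)_k) * (3/4)^k equals ((1+3x)/2) * ((4/3+x)_n (2/3-x)_n)/((2/3)_n (4/3)_n) + ((1-3x)/2) * ((2/3+x)_n (4/3-x)_n)/((2/3)_n (4/3)_n). -/

import Mathlib

/-- Pochhammer symbol (rising factorial) `(a)_k`. -/
noncomputable def poch (a : ℂ) (k : ℕ) : ℂ := ∏ j ∈ Finset.range k, (a + j)

theorem poch_zero (a : ℂ) : poch a 0 = 1 := by simp [poch]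

theorem poch_succ (a : ℂ) (k : ℕ) : poch a (k+1) = poch a k * (a + k) := by
  simp [poch, Finset.prod_range_succ]

theorem poch_succ_left (a : ℂ) (k : ℕ) : poch a (k+1) = a * poch (a+1) k := by
  induction k with
  | zero => simp [poch]
  | succ k ih =>
    rw [poch_succ, ih, poch_succ (a+1)]
    push_cast
    ring

/-- The quotient `(-n)_k / (-1-3n)_k`. -/
noncomputable def pochQuot (n k : ℕ) : ℂ := poch (-(n : ℂ)) k / poch (-1 - 3*n : ℂ) k

theorem pochQuot_succ_right (n k : ℕ) :
    pochQuot n (k+1) = pochQuot n k * ((k - n) / (k - 1 - 3*n)) := by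
  rw [pochQuot, pochQuot, poch_succ, poch_succ, mul_div_mul_comm]
  congr 2 <;> ring

theorem pochQuot_succ_left {n k : ℕ} (h : k ≤ n) :
    3 * ((n : ℂ) + 1 - k) * ((3*n + 2) * (3*n + 4)) * pochQuot (n+1) k =
      (3*n + 4 - k) * (3*n + 3 - k) * (3*n + 2 - k) * pochQuot n k := by
  induction k with
  | zero => simp [pochQuot, poch_zero]; ring
  | succ k ih =>
    obtain ⟨d, rfl⟩ := Nat.exists_eq_add_of_le h
    have ih := ih (by omega)
    rw [pochQuot_succ_right, pochQuot_succ_right]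
    push_cast at ih ⊢
    have e1 : (k : ℂ) - 1 - 3 * (k + 1 + d) ≠ 0 := by
      have : (2 * k + 3 * d + 4 : ℂ) ≠ 0 := by norm_cast
      contrapose! this
      linear_combination -this
    have e2 : (k : ℂ) - 1 - 3 * (k + 1 + d + 1) ≠ 0 := by
      have : (2 * k + 3 * d + 7 : ℂ) ≠ 0 := by norm_cast
      contrapose! this
      linear_combination -this
    rw [mul_div_assoc', mul_div_assoc', mul_div_assoc', mul_div_assoc', div_eq_div_iff e2 e1]
    linear_combination (-(d + 1 : ℂ)) * (k - 1 - 3 * (k + 1 + d)) * ih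

/-- Summand of the terminating series `₃F₂(-t, 2+t, -n; 3/2, -1-3n; 3/4)`. -/
noncomputable def strangeTerm (t : ℂ) (n k : ℕ) : ℂ :=
  poch (-t) k * poch (2 + t) k / ((Nat.factorial k : ℂ) * poch (3/2) k) * pochQuot n k *
    (3/4 : ℂ)^k

theorem strangeTerm_succ_right (t : ℂ) (n k : ℕ) :
    strangeTerm t n (k+1) = strangeTerm t n k *
      ((k - t) * (k + 2 + t) / ((k + 1) * (3/2 + k)) * ((k - n) / (k - 1 - 3*n)) * (3/4)) := by
  simp only [strangeTerm, pochQuot_succ_right, poch_succ, Nat.factorial_succ, pow_succ]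
  push_cast
  have : poch (-t) k * (-t + k) * (poch (2 + t) k * (2 + t + k)) /
      (((k : ℂ) + 1) * (Nat.factorial k : ℂ) * (poch (3/2) k * (3/2 + k))) =
      poch (-t) k * poch (2 + t) k / ((Nat.factorial k : ℂ) * poch (3/2) k) *
      ((k - t) * (k + 2 + t) / ((k + 1) * (3/2 + k))) := by
    rw [← mul_div_mul_comm]
    congr 1 <;> ring
  rw [this]
  ring

theorem strangeTerm_succ_left (t : ℂ) {n k : ℕ} (h : k ≤ n) :
    3 * ((n : ℂ) + 1 - k) * ((3*n + 2) * (3*n + 4)) * strangeTerm t (n+1) k =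
      (3*n + 4 - k) * (3*n + 3 - k) * (3*n + 2 - k) * strangeTerm t n k := by
  simp only [strangeTerm]
  linear_combination poch (-t) k * poch (2 + t) k / ((Nat.factorial k : ℂ) * poch (3/2) k) *
    (3/4 : ℂ)^k * pochQuot_succ_left h

theorem sum_strangeTerm_telescope (t : ℂ) {n m : ℕ} (h : m ≤ n) :
    ∑ k ∈ Finset.range (m+1), ((3*n + 2) * (3*n + 4) * strangeTerm t (n+1) k -
      (3*n + 4 + t) * (3*n + 2 - t) * strangeTerm t n k) =
      -((m - t) * (m + 2 + t) * strangeTerm t n m) := by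
  induction m with
  | zero =>
    have h0 : ∀ n, strangeTerm t n 0 = 1 := by simp [strangeTerm, pochQuot, poch_zero]
    simp [h0]
    ring
  | succ m ih =>
    rw [Finset.sum_range_succ, ih (by omega)]
    have hn := strangeTerm_succ_left t h
    have hk := strangeTerm_succ_right t n m
    obtain ⟨d, rfl⟩ := Nat.exists_eq_add_of_le h
    push_cast at hn hk ⊢
    have e1 : (m : ℂ) - 1 - 3 * (m + 1 + d) ≠ 0 := by
      have : (2 * m + 3 * d + 4 : ℂ) ≠ 0 := by norm_cast
      contrapose! this
      linear_combination -this
    have e2 : (m : ℂ) + 1 ≠ 0 := by norm_cast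
    have e3 : (3 + m * 2 : ℂ) ≠ 0 := by norm_cast; omega
    have e4 : (d : ℂ) + 1 ≠ 0 := by norm_cast
    have hk' : strangeTerm t (m + 1 + d) (m + 1) *
        ((m + 1) * (3/2 + m) * (m - 1 - 3 * (m + 1 + d))) =
        strangeTerm t (m + 1 + d) m *
          ((m - t) * (m + 2 + t) * (m - (m + 1 + d)) * (3/4)) := by
      rw [hk, show (3/2 : ℂ) + m = (3 + m * 2) / 2 by ring]
      field_simp
    apply mul_left_cancel₀ (mul_ne_zero (three_ne_zero (α := ℂ)) e4)
    linear_combination hn - 4 * hk'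

theorem sum_strangeTerm_succ (t : ℂ) (n : ℕ) :
    (3*n + 2) * (3*n + 4) * ∑ k ∈ Finset.range (n+2), strangeTerm t (n+1) k =
      (3*n + 4 + t) * (3*n + 2 - t) * ∑ k ∈ Finset.range (n+1), strangeTerm t n k := by
  have hs := sum_strangeTerm_telescope t (le_refl n)
  rw [Finset.sum_sub_distrib, ← Finset.mul_sum, ← Finset.mul_sum] at hs
  rw [Finset.sum_range_succ]
  have hn := strangeTerm_succ_left t (le_refl n)
  have hk := strangeTerm_succ_right t (n+1) n
  have e1 : (n : ℂ) + 2 ≠ 0 := by norm_cast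
  have e2 : (n : ℂ) + 1 ≠ 0 := by norm_cast
  have e3 : (3 : ℂ) + n * 2 ≠ 0 := by norm_cast; omega
  have hk' : strangeTerm t (n + 1) (n + 1) * (4 * ((n + 1) * (3 + n * 2) * (n + 2))) =
      strangeTerm t (n + 1) n * (3 * ((n - t) * (n + 2 + t))) := by
    rw [hk]
    have e4 : (3/2 : ℂ) + n = (3 + n * 2) / 2 := by ring
    have e5 : (n : ℂ) - 1 - 3 * ((n + 1 : ℕ) : ℂ) = -(2 * (n + 2)) := by push_cast; ring
    rw [e4, e5]
    push_cast
    field_simp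
    ring
  have hlast : (3*n + 2) * (3*n + 4) * strangeTerm t (n+1) (n+1) =
      (n - t) * (n + 2 + t) * strangeTerm t n n := by
    apply mul_left_cancel₀ (mul_ne_zero (mul_ne_zero (mul_ne_zero
      (by norm_num : (4 : ℂ) ≠ 0) e2) e3) e1)
    linear_combination (3*n + 2) * (3*n + 4) * hk' + (n - t) * (n + 2 + t) * hn
  linear_combination hs + hlast

theorem sum_strangeTerm (x : ℂ) (n : ℕ) :
    ∑ k ∈ Finset.range (n+1), strangeTerm (3*x) n k =
      poch (4/3 + x) n * poch (2/3 - x) n / (poch (2/3) n * poch (4/3) n) := by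
  induction n with
  | zero => simp [strangeTerm, pochQuot, poch_zero]
  | succ n ih =>
    have h := sum_strangeTerm_succ (3*x) n
    have e1 : (3 * n + 2 : ℂ) ≠ 0 := by norm_cast
    have e2 : (3 * n + 4 : ℂ) ≠ 0 := by norm_cast
    apply mul_left_cancel₀ (mul_ne_zero e1 e2)
    rw [h, ih]
    simp only [poch_succ]
    have e3 : (2/3 : ℂ) + n = (3 * n + 2) / 3 := by ring
    have e4 : (4/3 : ℂ) + n = (3 * n + 4) / 3 := by ring
    have e5 : poch (4/3 + x) n * (4/3 + x + n) * (poch (2/3 - x) n * (2/3 - x + n)) /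
        (poch (2/3) n * (2/3 + n) * (poch (4/3) n * (4/3 + n))) =
        poch (4/3 + x) n * poch (2/3 - x) n / (poch (2/3) n * poch (4/3) n) *
        ((4/3 + x + n) * (2/3 - x + n) / ((2/3 + n) * (4/3 + n))) := by
      rw [← mul_div_mul_comm]
      congr 1 <;> ring
    rw [e5, e3, e4]
    generalize poch (4/3 + x) n * poch (2/3 - x) n / (poch (2/3) n * poch (4/3) n) = P
    field_simp
    ring

theorem poch_mul_poch_neg (t : ℂ) (k : ℕ) :
    (1 + t) * (poch (-t) k * poch (2 + t) k) + (1 - t) * (poch t k * poch (2 - t) k) =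
      2 * (2 * k + 1) * (poch t k * poch (-t) k) := by
  cases k with
  | zero => simp [poch_zero]; ring
  | succ k =>
    have h : ∀ s : ℂ, (1 + s) * poch (2 + s) (k+1) =
        poch (s + 1) k * (s + 1 + k) * (s + 2 + k) := by
      intro s
      have := poch_succ_left (s + 1) (k + 1)
      rw [poch_succ, poch_succ] at this
      rw [show 2 + s = s + 1 + 1 by ring, add_comm 1 s, ← this]
      push_cast
      ring
    have h1 := h t
    have h2 := h (-t)
    rw [← sub_eq_add_neg, ← sub_eq_add_neg] at h2
    have h3 := poch_succ_left t k
    have h4 := poch_succ_left (-t) k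
    rw [mul_left_comm, h1, mul_left_comm (1 - t), h2, h3, h4]
    push_cast
    ring

theorem poch_three_halves (k : ℕ) : poch (3/2) k = (2 * k + 1) * poch (1/2) k := by
  have h := poch_succ_left (1/2) k
  rw [poch_succ] at h
  norm_num at h ⊢
  linear_combination -2 * h

theorem gosper_related_second_ell_one (n : ℕ) (x : ℂ) (h1 : 1 + 6*x ≠ 0) :
    ∑ k ∈ Finset.range (n+1),
      (poch (3*x) k * poch (-(3*x)) k * poch (-(n : ℂ)) k) /
        ((Nat.factorial k : ℂ) * poch (1/2) k * poch (-1 - 3*n : ℂ) k) * (3/4 : ℂ)^k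
      = (1 + 3*x)/2 * ((poch (4/3 + x) n * poch (2/3 - x) n) / (poch (2/3) n * poch (4/3) n))
        + (1 - 3*x)/2 * ((poch (2/3 + x) n * poch (4/3 - x) n) / (poch (2/3) n * poch (4/3) n)) := by
  have hx := sum_strangeTerm x n
  have hy := sum_strangeTerm (-x) n
  rw [← sub_eq_add_neg, sub_neg_eq_add, mul_comm (poch (4/3 - x) n)] at hy
  rw [← hx, ← hy, Finset.mul_sum, Finset.mul_sum, ← Finset.sum_add_distrib]
  refine Finset.sum_congr rfl fun k _ => ?_
  have h := poch_mul_poch_neg (3*x) k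
  have e : (2 * k + 1 : ℂ) ≠ 0 := by norm_cast
  have e' : (poch (1/2) k)⁻¹ = (2 * k + 1) * (poch (3/2) k)⁻¹ := by
    rw [poch_three_halves, mul_inv, mul_inv_cancel_left₀ e]
  simp only [strangeTerm, pochQuot, mul_neg, neg_neg, ← sub_eq_add_neg, div_eq_mul_inv, mul_inv]
    at e' ⊢
  rw [e']
  linear_combination (-1/2 : ℂ) * (Nat.factorial k : ℂ)⁻¹ * (poch (3 * 2⁻¹) k)⁻¹ *
    poch (-(n : ℂ)) k * (poch (-1 - 3*n : ℂ) k)⁻¹ * (3 * 4⁻¹ : ℂ)^k * h
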